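/- arXiv:1402.1384 — 4 statements merged into one kernel-verified Lean document; each statement's English description precedes it below -/
import Mathlib

section
/- For every ρ ∈ [0,1], Σ > 0 and R ∈ ℝ, the function R' ↦ log Z(R',Σ) has derivative at R equal to (f_a(R,Σ) − R)/Σ². -/
open MeasureTheory ProbabilityTheory

/-- The prior `P₀ = ρ·N(0,1) + (1-ρ)·δ₀`. -/
noncomputable def P0 (ρ : ℝ) : Measure ℝ :=
  ENNReal.ofReal ρ • gaussianReal 0 1 + ENNReal.ofReal (1 - ρ) • Measure.dirac 0

/-- Partition function `Z(R,Σ) = ∫ exp(-(x-R)²/(2Σ²)) dP₀(x)`. -/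
noncomputable def Zpart (ρ R σ : ℝ) : ℝ :=
  ∫ x, Real.exp (-(x - R) ^ 2 / (2 * σ ^ 2)) ∂(P0 ρ)

/-- Posterior mean `f_a(R,Σ)`. -/
noncomputable def fa (ρ R σ : ℝ) : ℝ :=
  (Zpart ρ R σ)⁻¹ * ∫ x, x * Real.exp (-(x - R) ^ 2 / (2 * σ ^ 2)) ∂(P0 ρ)

/-- Posterior variance `f_c(R,Σ)`. -/
noncomputable def fc (ρ R σ : ℝ) : ℝ :=
  (Zpart ρ R σ)⁻¹ * (∫ x, x ^ 2 * Real.exp (-(x - R) ^ 2 / (2 * σ ^ 2)) ∂(P0 ρ))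
    - fa ρ R σ ^ 2

theorem hasDerivAt_exp_neg_sub_sq_div (σ x r : ℝ) :
    HasDerivAt (fun r => Real.exp (-(x - r) ^ 2 / (2 * σ ^ 2)))
      ((x - r) / σ ^ 2 * Real.exp (-(x - r) ^ 2 / (2 * σ ^ 2))) r := by
  have h := (((((hasDerivAt_id r).const_sub x).pow 2).neg).div_const (2 * σ ^ 2)).exp
  refine h.congr_deriv ?_
  simp only [Pi.neg_apply, Pi.pow_apply, id_eq]
  rw [mul_comm, ← mul_div_mul_left (x - r) (σ ^ 2) two_ne_zero]
  norm_num

theorem abs_mul_exp_neg_sq_div_two_le_one (t : ℝ) : |t| * Real.exp (-t ^ 2 / 2) ≤ 1 := by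
  have h : |t| ≤ Real.exp (t ^ 2 / 2) := by
    nlinarith [Real.add_one_le_exp (t ^ 2 / 2), sq_nonneg (|t| - 1), sq_abs t]
  calc |t| * Real.exp (-t ^ 2 / 2)
      ≤ Real.exp (t ^ 2 / 2) * Real.exp (-t ^ 2 / 2) := by gcongr
    _ = 1 := by rw [← Real.exp_add, neg_div, add_neg_cancel, Real.exp_zero]

theorem norm_sub_div_sq_mul_exp_le {σ : ℝ} (hσ : 0 < σ) (x r : ℝ) :
    ‖(x - r) / σ ^ 2 * Real.exp (-(x - r) ^ 2 / (2 * σ ^ 2))‖ ≤ σ⁻¹ := by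
  have hexp : -(x - r) ^ 2 / (2 * σ ^ 2) = -((x - r) / σ) ^ 2 / 2 := by field_simp
  have hdiv : (x - r) / σ ^ 2 = σ⁻¹ * ((x - r) / σ) := by field_simp
  rw [hexp, hdiv, norm_mul, norm_mul, Real.norm_eq_abs, Real.norm_eq_abs, Real.norm_eq_abs,
    Real.abs_exp, abs_of_pos (inv_pos.2 hσ), mul_assoc]
  exact mul_le_of_le_one_right (inv_pos.2 hσ).le (abs_mul_exp_neg_sq_div_two_le_one _)

theorem integrable_exp_neg_sub_sq_div (μ : Measure ℝ) [IsFiniteMeasure μ] (σ r : ℝ) :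
    Integrable (fun x => Real.exp (-(x - r) ^ 2 / (2 * σ ^ 2))) μ := by
  refine Integrable.of_bound (by fun_prop) 1 (ae_of_all _ fun x => ?_)
  rw [Real.norm_eq_abs, Real.abs_exp, Real.exp_le_one_iff]
  exact div_nonpos_of_nonpos_of_nonneg (neg_nonpos.2 (sq_nonneg _)) (by positivity)

/-- The logarithmic derivative of the Gaussian smoothing of a nonzero finite measure
(Tweedie's formula). -/
theorem hasDerivAt_log_integral_exp_neg_sub_sq_div (μ : Measure ℝ) [IsFiniteMeasure μ] [NeZero μ]
    {σ : ℝ} (hσ : 0 < σ) (r : ℝ) :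
    HasDerivAt (fun r => Real.log (∫ x, Real.exp (-(x - r) ^ 2 / (2 * σ ^ 2)) ∂μ))
      (((∫ x, Real.exp (-(x - r) ^ 2 / (2 * σ ^ 2)) ∂μ)⁻¹ *
        (∫ x, x * Real.exp (-(x - r) ^ 2 / (2 * σ ^ 2)) ∂μ) - r) / σ ^ 2) r := by
  have h_int := integrable_exp_neg_sub_sq_div μ σ r
  have hpos : 0 < ∫ x, Real.exp (-(x - r) ^ 2 / (2 * σ ^ 2)) ∂μ := integral_exp_pos h_int
  obtain ⟨h_int', hderiv⟩ := hasDerivAt_integral_of_dominated_loc_of_deriv_le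
    (μ := μ) (x₀ := r) (s := Set.univ) (bound := fun _ => σ⁻¹)
    (F := fun r x => Real.exp (-(x - r) ^ 2 / (2 * σ ^ 2)))
    (F' := fun r x => (x - r) / σ ^ 2 * Real.exp (-(x - r) ^ 2 / (2 * σ ^ 2)))
    Filter.univ_mem (Filter.Eventually.of_forall fun r => by fun_prop) h_int (by fun_prop)
    (ae_of_all _ fun x r _ => norm_sub_div_sq_mul_exp_le hσ x r) (integrable_const _)
    (ae_of_all _ fun x r _ => hasDerivAt_exp_neg_sub_sq_div σ x r)
  have hmean : ∫ x, x * Real.exp (-(x - r) ^ 2 / (2 * σ ^ 2)) ∂μ =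
      σ ^ 2 * (∫ x, (x - r) / σ ^ 2 * Real.exp (-(x - r) ^ 2 / (2 * σ ^ 2)) ∂μ) +
        r * ∫ x, Real.exp (-(x - r) ^ 2 / (2 * σ ^ 2)) ∂μ := by
    rw [← integral_const_mul, ← integral_const_mul,
      ← integral_add (h_int'.const_mul _) (h_int.const_mul _)]
    congr with x
    field_simp
    ring
  refine (hderiv.log hpos.ne').congr_deriv ?_
  rw [hmean]
  generalize (∫ x, (x - r) / σ ^ 2 * Real.exp (-(x - r) ^ 2 / (2 * σ ^ 2)) ∂μ) = D
  generalize (∫ x, Real.exp (-(x - r) ^ 2 / (2 * σ ^ 2)) ∂μ) = Z at hpos ⊢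
  field_simp
  ring

theorem isProbabilityMeasure_P0 {ρ : ℝ} (hρ : ρ ∈ Set.Icc (0 : ℝ) 1) :
    IsProbabilityMeasure (P0 ρ) :=
  ⟨by simp [P0, ← ENNReal.ofReal_add hρ.1 (sub_nonneg.2 hρ.2)]⟩

/-- for every ρ ∈ [0,1], Σ > 0 and R ∈ ℝ, the function
`R' ↦ log Z(R',Σ)` has derivative at `R` equal to `(f_a(R,Σ) − R)/Σ²`. -/
theorem stmt0 (ρ : ℝ) (hρ : ρ ∈ Set.Icc (0 : ℝ) 1) (σ : ℝ) (hσ : 0 < σ) (R : ℝ) :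
    HasDerivAt (fun R' => Real.log (Zpart ρ R' σ)) ((fa ρ R σ - R) / σ ^ 2) R := by
  have := isProbabilityMeasure_P0 hρ
  exact hasDerivAt_log_integral_exp_neg_sub_sq_div (P0 ρ) hσ R
end

section
/- Let ρ ∈ [0,1], Δ > 0, F ∈ ℝ^{M×N}, y ∈ ℝ^M. A point (R,Σ,a,c) with all Σ_i > 0 is a stationary point of the unconstrained mean-field free energy F_MF (i.e., all partial derivatives with respect to each R_i, each Σ_i, each a_i and each c_i vanish) if and only if for every i: (i) 1/Σ_i² = ∑_μ F_{μi}²/Δ, (ii) R_i = a_i + (Σ_i²/Δ)·∑_μ F_{μi}·(y_μ − ∑_j F_{μj} a_j), (iii) a_i = f_a(R_i,Σ_i), and (iv) c_i = f_c(R_i,Σ_i). -/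
open MeasureTheory ProbabilityTheory

/-- The (unconstrained) mean-field free energy `F_MF(R,Σ,a,c)`. -/
noncomputable def FMF (ρ : ℝ) {M N : ℕ} (F : Fin M → Fin N → ℝ) (y : Fin M → ℝ)
    (Δ : ℝ) (R Sv a c : Fin N → ℝ) : ℝ :=
  (M : ℝ) / 2 * Real.log (2 * Real.pi * Δ)
    + 1 / (2 * Δ) * ∑ μ, ((y μ - ∑ i, F μ i * a i) ^ 2 + ∑ i, F μ i ^ 2 * c i)
    - ∑ i, (Real.log (Zpart ρ (R i) (Sv i)) + (c i + (a i - R i) ^ 2) / (2 * Sv i ^ 2))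

/-- The Gaussian weight `exp(-(x-R)²/(2σ²))` of the partition function. -/
noncomputable def gaussWeight (R σ x : ℝ) : ℝ := Real.exp (-(x - R) ^ 2 / (2 * σ ^ 2))

lemma gaussWeight_pos (R σ x : ℝ) : 0 < gaussWeight R σ x := Real.exp_pos _

lemma gaussWeight_le_one (R σ x : ℝ) : gaussWeight R σ x ≤ 1 := by
  refine Real.exp_le_one_iff.2 ?_
  rw [neg_div]
  exact neg_nonpos.2 (by positivity)

lemma continuous_gaussWeight (R σ : ℝ) : Continuous (gaussWeight R σ) := by
  unfold gaussWeight
  fun_prop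

lemma sq_mul_gaussWeight_le (R x : ℝ) {σ : ℝ} (hσ : 0 < σ) :
    (x - R) ^ 2 * gaussWeight R σ x ≤ 2 * σ ^ 2 := by
  set t := (x - R) ^ 2 / (2 * σ ^ 2) with ht
  have hw : gaussWeight R σ x = (Real.exp t)⁻¹ := by
    rw [gaussWeight, neg_div, Real.exp_neg]
  have hx : (x - R) ^ 2 = 2 * σ ^ 2 * t := by
    rw [ht]; field_simp
  have hle : t * (Real.exp t)⁻¹ ≤ 1 := by
    rw [← div_eq_mul_inv, div_le_one (Real.exp_pos t)]
    linarith [Real.add_one_le_exp t]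
  rw [hw, hx, mul_assoc]
  exact mul_le_of_le_one_right (by positivity) hle

lemma abs_mul_gaussWeight_le (R x : ℝ) {σ : ℝ} (hσ : 0 < σ) :
    |x - R| * gaussWeight R σ x ≤ 1 + 2 * σ ^ 2 := by
  have habs : |x - R| ≤ 1 + (x - R) ^ 2 := by
    nlinarith [sq_abs (x - R), sq_nonneg (|x - R| - 1), abs_nonneg (x - R)]
  calc |x - R| * gaussWeight R σ x
      ≤ (1 + (x - R) ^ 2) * gaussWeight R σ x :=
        mul_le_mul_of_nonneg_right habs (gaussWeight_pos R σ x).le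
    _ = gaussWeight R σ x + (x - R) ^ 2 * gaussWeight R σ x := by ring
    _ ≤ 1 + 2 * σ ^ 2 := add_le_add (gaussWeight_le_one R σ x) (sq_mul_gaussWeight_le R x hσ)

lemma hasDerivAt_gaussWeight_mean (R σ x : ℝ) :
    HasDerivAt (fun r => gaussWeight r σ x) ((x - R) / σ ^ 2 * gaussWeight R σ x) R := by
  have h := ((((hasDerivAt_id R).const_sub x).pow 2).neg.div_const (2 * σ ^ 2)).exp
  refine h.congr_deriv ?_
  simp only [gaussWeight, id, Pi.pow_apply, Pi.neg_apply]
  by_cases hσ : σ = 0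
  · simp [hσ]
  · field_simp
    ring

lemma hasDerivAt_gaussWeight_scale (R x : ℝ) {σ : ℝ} (hσ : σ ≠ 0) :
    HasDerivAt (fun s => gaussWeight R s x) ((x - R) ^ 2 / σ ^ 3 * gaussWeight R σ x) σ := by
  have h := ((hasDerivAt_const σ (-(x - R) ^ 2)).div (((hasDerivAt_id σ).pow 2).const_mul 2)
    (by simpa using hσ)).exp
  refine h.congr_deriv ?_
  simp only [gaussWeight, id, Pi.pow_apply, Pi.div_apply]
  field_simp
  ring

section FiniteMeasure

variable (μ : Measure ℝ) [IsFiniteMeasure μ]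

lemma integrable_gaussWeight (R σ : ℝ) : Integrable (gaussWeight R σ) μ := by
  refine Integrable.of_bound (continuous_gaussWeight R σ).aestronglyMeasurable 1
    (.of_forall fun x => ?_)
  rw [Real.norm_of_nonneg (gaussWeight_pos R σ x).le]
  exact gaussWeight_le_one R σ x

lemma integrable_sub_mul_gaussWeight (R : ℝ) {σ : ℝ} (hσ : 0 < σ) :
    Integrable (fun x => (x - R) * gaussWeight R σ x) μ := by
  have hc := continuous_gaussWeight R σ
  refine Integrable.of_bound (by fun_prop) (1 + 2 * σ ^ 2) (.of_forall fun x => ?_)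
  rw [norm_mul, Real.norm_of_nonneg (gaussWeight_pos R σ x).le]
  exact abs_mul_gaussWeight_le R x hσ

lemma integrable_sub_sq_mul_gaussWeight (R : ℝ) {σ : ℝ} (hσ : 0 < σ) :
    Integrable (fun x => (x - R) ^ 2 * gaussWeight R σ x) μ := by
  have hc := continuous_gaussWeight R σ
  refine Integrable.of_bound (by fun_prop) (2 * σ ^ 2) (.of_forall fun x => ?_)
  rw [Real.norm_of_nonneg (mul_nonneg (sq_nonneg _) (gaussWeight_pos R σ x).le)]
  exact sq_mul_gaussWeight_le R x hσ

lemma integral_mul_gaussWeight (R : ℝ) {σ : ℝ} (hσ : 0 < σ) :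
    ∫ x, x * gaussWeight R σ x ∂μ
      = (∫ x, (x - R) * gaussWeight R σ x ∂μ) + R * ∫ x, gaussWeight R σ x ∂μ := by
  rw [← integral_const_mul, ← integral_add (integrable_sub_mul_gaussWeight μ R hσ)
    ((integrable_gaussWeight μ R σ).const_mul R)]
  exact integral_congr_ae (.of_forall fun x => by ring)

lemma integral_sq_mul_gaussWeight (R : ℝ) {σ : ℝ} (hσ : 0 < σ) :
    ∫ x, x ^ 2 * gaussWeight R σ x ∂μ
      = (∫ x, (x - R) ^ 2 * gaussWeight R σ x ∂μ)
        + 2 * R * (∫ x, (x - R) * gaussWeight R σ x ∂μ)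
        + R ^ 2 * ∫ x, gaussWeight R σ x ∂μ := by
  have h₁ := (integrable_sub_mul_gaussWeight μ R hσ).const_mul (2 * R)
  have h₂ := integrable_sub_sq_mul_gaussWeight μ R hσ
  rw [← integral_const_mul, ← integral_const_mul, ← integral_add h₂ h₁,
    ← integral_add (h₂.fun_add h₁) ((integrable_gaussWeight μ R σ).const_mul (R ^ 2))]
  exact integral_congr_ae (.of_forall fun x => by ring)

lemma hasDerivAt_integral_gaussWeight_mean (R : ℝ) {σ : ℝ} (hσ : 0 < σ) :
    HasDerivAt (fun r => ∫ x, gaussWeight r σ x ∂μ)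
      ((∫ x, (x - R) * gaussWeight R σ x ∂μ) / σ ^ 2) R := by
  have hc := continuous_gaussWeight R σ
  have h := (hasDerivAt_integral_of_dominated_loc_of_deriv_le (μ := μ) (𝕜 := ℝ)
    (F := fun r x => gaussWeight r σ x) (x₀ := R) (s := Set.univ)
    (F' := fun r x => (x - r) / σ ^ 2 * gaussWeight r σ x)
    (bound := fun _ => (1 + 2 * σ ^ 2) / σ ^ 2) Filter.univ_mem
    (.of_forall fun r => (continuous_gaussWeight r σ).aestronglyMeasurable)
    (integrable_gaussWeight μ R σ) (by fun_prop)
    (.of_forall fun x r _ => ?_) (integrable_const _)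
    (.of_forall fun x r _ => hasDerivAt_gaussWeight_mean r σ x)).2
  · refine h.congr_deriv ?_
    rw [← integral_div]
    exact integral_congr_ae (.of_forall fun x => by ring)
  · rw [norm_mul, norm_div, Real.norm_of_nonneg (gaussWeight_pos r σ x).le,
      Real.norm_of_nonneg (sq_nonneg σ), div_mul_eq_mul_div]
    exact div_le_div_of_nonneg_right (abs_mul_gaussWeight_le r x hσ) (sq_nonneg σ)

lemma hasDerivAt_integral_gaussWeight_scale (R : ℝ) {σ : ℝ} (hσ : 0 < σ) :
    HasDerivAt (fun s => ∫ x, gaussWeight R s x ∂μ)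
      ((∫ x, (x - R) ^ 2 * gaussWeight R σ x ∂μ) / σ ^ 3) σ := by
  have hc := continuous_gaussWeight R σ
  have h := (hasDerivAt_integral_of_dominated_loc_of_deriv_le (μ := μ) (𝕜 := ℝ)
    (F := fun s x => gaussWeight R s x) (x₀ := σ) (s := Set.Ioi (σ / 2))
    (F' := fun s x => (x - R) ^ 2 / s ^ 3 * gaussWeight R s x)
    (bound := fun _ => 4 / σ) (Ioi_mem_nhds (by linarith))
    (.of_forall fun s => (continuous_gaussWeight R s).aestronglyMeasurable)
    (integrable_gaussWeight μ R σ) (by fun_prop)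
    (.of_forall fun x s hs => ?_) (integrable_const _)
    (.of_forall fun x s hs => hasDerivAt_gaussWeight_scale R x
      ((half_pos hσ).trans hs).ne')).2
  · refine h.congr_deriv ?_
    rw [← integral_div]
    exact integral_congr_ae (.of_forall fun x => by ring)
  · have hs' : σ / 2 < s := hs
    have hs0 : 0 < s := (half_pos hσ).trans hs
    rw [Real.norm_of_nonneg (mul_nonneg (by positivity) (gaussWeight_pos R s x).le),
      div_mul_eq_mul_div]
    calc (x - R) ^ 2 * gaussWeight R s x / s ^ 3
        ≤ 2 * s ^ 2 / s ^ 3 :=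
          div_le_div_of_nonneg_right (sq_mul_gaussWeight_le R x hs0) (by positivity)
      _ = 2 / s := by field_simp
      _ ≤ 4 / σ := by
          rw [div_le_div_iff₀ hs0 hσ]
          linarith

end FiniteMeasure

instance isFiniteMeasure_P0 (ρ : ℝ) : IsFiniteMeasure (P0 ρ) := by
  constructor
  simp [P0]

lemma P0_ne_zero {ρ : ℝ} (hρ : ρ ∈ Set.Icc (0 : ℝ) 1) : P0 ρ ≠ 0 := by
  intro h
  have huniv : P0 ρ Set.univ = 1 := by
    simp [P0, ← ENNReal.ofReal_add hρ.1 (sub_nonneg.2 hρ.2)]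
  simp [h] at huniv

lemma Zpart_pos {ρ : ℝ} (hρ : ρ ∈ Set.Icc (0 : ℝ) 1) (R σ : ℝ) : 0 < Zpart ρ R σ := by
  have : NeZero (P0 ρ) := ⟨P0_ne_zero hρ⟩
  exact integral_exp_pos (integrable_gaussWeight (P0 ρ) R σ)

lemma hasDerivAt_log_Zpart_mean {ρ : ℝ} (hρ : ρ ∈ Set.Icc (0 : ℝ) 1) (R : ℝ) {σ : ℝ}
    (hσ : 0 < σ) :
    HasDerivAt (fun r => Real.log (Zpart ρ r σ)) ((fa ρ R σ - R) / σ ^ 2) R := by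
  have hZ := (Zpart_pos hρ R σ).ne'
  have h : HasDerivAt (fun r => Zpart ρ r σ) _ R :=
    hasDerivAt_integral_gaussWeight_mean (P0 ρ) R hσ
  refine (h.log hZ).congr_deriv ?_
  have hm : ∫ x, x * gaussWeight R σ x ∂(P0 ρ)
      = (∫ x, (x - R) * gaussWeight R σ x ∂(P0 ρ)) + R * Zpart ρ R σ :=
    integral_mul_gaussWeight (P0 ρ) R hσ
  have hfa : fa ρ R σ = (Zpart ρ R σ)⁻¹ * ∫ x, x * gaussWeight R σ x ∂(P0 ρ) := rfl
  rw [hfa, hm]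
  field_simp
  ring

lemma hasDerivAt_log_Zpart_scale {ρ : ℝ} (hρ : ρ ∈ Set.Icc (0 : ℝ) 1) (R : ℝ) {σ : ℝ}
    (hσ : 0 < σ) :
    HasDerivAt (fun s => Real.log (Zpart ρ R s))
      ((fc ρ R σ + (fa ρ R σ - R) ^ 2) / σ ^ 3) σ := by
  have hZ := (Zpart_pos hρ R σ).ne'
  have h : HasDerivAt (fun s => Zpart ρ R s) _ σ :=
    hasDerivAt_integral_gaussWeight_scale (P0 ρ) R hσ
  refine (h.log hZ).congr_deriv ?_
  have hm : ∫ x, x * gaussWeight R σ x ∂(P0 ρ)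
      = (∫ x, (x - R) * gaussWeight R σ x ∂(P0 ρ)) + R * Zpart ρ R σ :=
    integral_mul_gaussWeight (P0 ρ) R hσ
  have hm₂ : ∫ x, x ^ 2 * gaussWeight R σ x ∂(P0 ρ)
      = (∫ x, (x - R) ^ 2 * gaussWeight R σ x ∂(P0 ρ))
        + 2 * R * (∫ x, (x - R) * gaussWeight R σ x ∂(P0 ρ)) + R ^ 2 * Zpart ρ R σ :=
    integral_sq_mul_gaussWeight (P0 ρ) R hσ
  have hfa : fa ρ R σ = (Zpart ρ R σ)⁻¹ * ∫ x, x * gaussWeight R σ x ∂(P0 ρ) := rfl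
  have hfc : fc ρ R σ = (Zpart ρ R σ)⁻¹ * (∫ x, x ^ 2 * gaussWeight R σ x ∂(P0 ρ))
      - fa ρ R σ ^ 2 := rfl
  rw [hfc, hfa, hm₂, hm]
  field_simp
  ring

/-- The partial derivative of a separable sum is the derivative of the corresponding summand. -/
lemma hasDerivAt_sum_update {ι : Type*} [Fintype ι] [DecidableEq ι] (g : ι → ℝ → ℝ)
    (v : ι → ℝ) (i : ι) {d : ℝ} (h : HasDerivAt (g i) d (v i)) :
    HasDerivAt (fun t => ∑ j, g j (Function.update v i t j)) d (v i) := by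
  have hterm : ∀ j ∈ Finset.univ,
      HasDerivAt (fun t => g j (Function.update v i t j)) (if j = i then d else 0) (v i) := by
    intro j _
    by_cases hj : j = i
    · subst hj
      simpa using h
    · simpa [hj] using hasDerivAt_const (v i) (g j (v j))
  simpa using HasDerivAt.fun_sum hterm

section FreeEnergy

variable {ρ : ℝ} {M N : ℕ} (F : Fin M → Fin N → ℝ) (y : Fin M → ℝ)

lemma hasDerivAt_FMF_mean (hρ : ρ ∈ Set.Icc (0 : ℝ) 1) (Δ : ℝ) (R Sv a c : Fin N → ℝ)
    (i : Fin N) (hS : 0 < Sv i) :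
    HasDerivAt (fun t => FMF ρ F y Δ (Function.update R i t) Sv a c)
      ((a i - fa ρ (R i) (Sv i)) / Sv i ^ 2) (R i) := by
  have hquad := (((((hasDerivAt_id (R i)).const_sub (a i)).fun_pow 2).const_add (c i)).div_const
    (2 * Sv i ^ 2))
  have h := (hasDerivAt_sum_update
    (fun j t => Real.log (Zpart ρ t (Sv j)) + (c j + (a j - t) ^ 2) / (2 * Sv j ^ 2)) R i
    ((hasDerivAt_log_Zpart_mean hρ (R i) hS).fun_add hquad)).const_sub
      ((M : ℝ) / 2 * Real.log (2 * Real.pi * Δ)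
        + 1 / (2 * Δ) * ∑ μ, ((y μ - ∑ i, F μ i * a i) ^ 2 + ∑ i, F μ i ^ 2 * c i))
  refine HasDerivAt.congr_deriv h ?_
  simp only [id]
  field_simp
  ring

lemma hasDerivAt_FMF_scale (hρ : ρ ∈ Set.Icc (0 : ℝ) 1) (Δ : ℝ) (R Sv a c : Fin N → ℝ)
    (i : Fin N) (hS : 0 < Sv i) :
    HasDerivAt (fun t => FMF ρ F y Δ R (Function.update Sv i t) a c)
      ((c i + (a i - R i) ^ 2 - (fc ρ (R i) (Sv i) + (fa ρ (R i) (Sv i) - R i) ^ 2)) / Sv i ^ 3)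
      (Sv i) := by
  have hquad := (hasDerivAt_const (Sv i) (c i + (a i - R i) ^ 2)).fun_div
    (((hasDerivAt_id (Sv i)).fun_pow 2).const_mul 2) (by simpa using hS.ne')
  have h := (hasDerivAt_sum_update
    (fun j t => Real.log (Zpart ρ (R j) t) + (c j + (a j - R j) ^ 2) / (2 * t ^ 2)) Sv i
    ((hasDerivAt_log_Zpart_scale hρ (R i) hS).fun_add hquad)).const_sub
      ((M : ℝ) / 2 * Real.log (2 * Real.pi * Δ)
        + 1 / (2 * Δ) * ∑ μ, ((y μ - ∑ i, F μ i * a i) ^ 2 + ∑ i, F μ i ^ 2 * c i))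
  refine HasDerivAt.congr_deriv h ?_
  simp only [id]
  field_simp
  ring

lemma hasDerivAt_FMF_estimate (Δ : ℝ) (R Sv a c : Fin N → ℝ) (i : Fin N) :
    HasDerivAt (fun t => FMF ρ F y Δ R Sv (Function.update a i t) c)
      ((R i - a i) / Sv i ^ 2 - 1 / Δ * ∑ μ, F μ i * (y μ - ∑ j, F μ j * a j)) (a i) := by
  have hquad := (((((hasDerivAt_id (a i)).sub_const (R i)).fun_pow 2).const_add (c i)).div_const
    (2 * Sv i ^ 2)).const_add (Real.log (Zpart ρ (R i) (Sv i)))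
  have hprior := hasDerivAt_sum_update
    (fun j t => Real.log (Zpart ρ (R j) (Sv j)) + (c j + (t - R j) ^ 2) / (2 * Sv j ^ 2)) a i hquad
  have hres : ∀ μ ∈ Finset.univ, HasDerivAt
      (fun t => (y μ - ∑ j, F μ j * Function.update a i t j) ^ 2 + ∑ j, F μ j ^ 2 * c j)
      (-2 * (F μ i * (y μ - ∑ j, F μ j * a j))) (a i) := by
    intro μ _
    have hlin := hasDerivAt_sum_update (fun j t => F μ j * t) a i
      ((hasDerivAt_id (a i)).const_mul (F μ i))
    refine (((hlin.const_sub (y μ)).fun_pow 2).add_const _).congr_deriv ?_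
    simp only [Function.update_eq_self]
    ring
  have h := (((HasDerivAt.fun_sum hres).const_mul (1 / (2 * Δ))).const_add
    ((M : ℝ) / 2 * Real.log (2 * Real.pi * Δ))).fun_sub hprior
  refine HasDerivAt.congr_deriv h ?_
  rw [← Finset.mul_sum]
  simp only [id]
  ring

lemma hasDerivAt_FMF_variance (Δ : ℝ) (R Sv a c : Fin N → ℝ) (i : Fin N) :
    HasDerivAt (fun t => FMF ρ F y Δ R Sv a (Function.update c i t))
      ((∑ μ, F μ i ^ 2 / Δ - 1 / Sv i ^ 2) / 2) (c i) := by
  have hquad := (((hasDerivAt_id (c i)).add_const ((a i - R i) ^ 2)).div_const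
    (2 * Sv i ^ 2)).const_add (Real.log (Zpart ρ (R i) (Sv i)))
  have hprior := hasDerivAt_sum_update
    (fun j t => Real.log (Zpart ρ (R j) (Sv j)) + (t + (a j - R j) ^ 2) / (2 * Sv j ^ 2)) c i hquad
  have hres : ∀ μ ∈ Finset.univ, HasDerivAt
      (fun t => (y μ - ∑ j, F μ j * a j) ^ 2 + ∑ j, F μ j ^ 2 * Function.update c i t j)
      (F μ i ^ 2) (c i) := by
    intro μ _
    have hlin := hasDerivAt_sum_update (fun j t => F μ j ^ 2 * t) c i
      ((hasDerivAt_id (c i)).const_mul (F μ i ^ 2))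
    simpa using hlin.const_add ((y μ - ∑ j, F μ j * a j) ^ 2)
  have h := (((HasDerivAt.fun_sum hres).const_mul (1 / (2 * Δ))).const_add
    ((M : ℝ) / 2 * Real.log (2 * Real.pi * Δ))).fun_sub hprior
  refine HasDerivAt.congr_deriv h ?_
  rw [← Finset.sum_div]
  ring

end FreeEnergy

lemma HasDerivAt.zero_iff_eq_zero {f : ℝ → ℝ} {d x : ℝ} (h : HasDerivAt f d x) :
    HasDerivAt f 0 x ↔ d = 0 :=
  ⟨fun h₀ => h.unique h₀, fun hd => hd ▸ h⟩

/-- a point `(R,Σ,a,c)` with all `Σ_i > 0` is a stationary point of the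
unconstrained mean-field free energy (all partial derivatives w.r.t. each `R_i`, `Σ_i`,
`a_i`, `c_i` vanish) iff the mean-field fixed-point equations (i)–(iv) hold. -/
theorem stmt5 (ρ : ℝ) (hρ : ρ ∈ Set.Icc (0 : ℝ) 1) {M N : ℕ}
    (F : Fin M → Fin N → ℝ) (y : Fin M → ℝ) (Δ : ℝ) (hΔ : 0 < Δ)
    (R Sv a c : Fin N → ℝ) (hS : ∀ i, 0 < Sv i) :
    ((∀ i, HasDerivAt (fun t => FMF ρ F y Δ (Function.update R i t) Sv a c) 0 (R i)) ∧
     (∀ i, HasDerivAt (fun t => FMF ρ F y Δ R (Function.update Sv i t) a c) 0 (Sv i)) ∧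
     (∀ i, HasDerivAt (fun t => FMF ρ F y Δ R Sv (Function.update a i t) c) 0 (a i)) ∧
     (∀ i, HasDerivAt (fun t => FMF ρ F y Δ R Sv a (Function.update c i t)) 0 (c i)))
    ↔ (∀ i,
        1 / Sv i ^ 2 = ∑ μ, F μ i ^ 2 / Δ ∧
        R i = a i + Sv i ^ 2 / Δ * ∑ μ, F μ i * (y μ - ∑ j, F μ j * a j) ∧
        a i = fa ρ (R i) (Sv i) ∧
        c i = fc ρ (R i) (Sv i)) := by
  have hR i := (hasDerivAt_FMF_mean F y hρ Δ R Sv a c i (hS i)).zero_iff_eq_zero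
  have hσ i := (hasDerivAt_FMF_scale F y hρ Δ R Sv a c i (hS i)).zero_iff_eq_zero
  have ha i := (hasDerivAt_FMF_estimate (ρ := ρ) F y Δ R Sv a c i).zero_iff_eq_zero
  have hc i := (hasDerivAt_FMF_variance (ρ := ρ) F y Δ R Sv a c i).zero_iff_eq_zero
  simp only [hR, hσ, ha, hc, ← forall_and]
  refine forall_congr' fun i => ?_
  have hi : Sv i ≠ 0 := (hS i).ne'
  have eR : (a i - fa ρ (R i) (Sv i)) / Sv i ^ 2 = 0 ↔ a i = fa ρ (R i) (Sv i) := by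
    simp [hi, sub_eq_zero]
  have eσ : (c i + (a i - R i) ^ 2 - (fc ρ (R i) (Sv i) + (fa ρ (R i) (Sv i) - R i) ^ 2))
      / Sv i ^ 3 = 0
      ↔ c i + (a i - R i) ^ 2 = fc ρ (R i) (Sv i) + (fa ρ (R i) (Sv i) - R i) ^ 2 := by
    simp [hi, sub_eq_zero]
  have ea : (R i - a i) / Sv i ^ 2 - 1 / Δ * ∑ μ, F μ i * (y μ - ∑ j, F μ j * a j) = 0
      ↔ R i = a i + Sv i ^ 2 / Δ * ∑ μ, F μ i * (y μ - ∑ j, F μ j * a j) := by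
    rw [sub_eq_zero, div_eq_iff (pow_ne_zero 2 hi), sub_eq_iff_eq_add']
    ring_nf
  have ec : (∑ μ, F μ i ^ 2 / Δ - 1 / Sv i ^ 2) / 2 = 0
      ↔ 1 / Sv i ^ 2 = ∑ μ, F μ i ^ 2 / Δ := by
    simp only [div_eq_zero_iff, OfNat.ofNat_ne_zero, or_false, sub_eq_zero]
    exact eq_comm
  rw [eR, eσ, ea, ec]
  constructor
  · rintro ⟨h₁, h₂, h₃, h₄⟩
    rw [← h₁] at h₂
    exact ⟨h₄, h₃, h₁, add_right_cancel h₂⟩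
  · rintro ⟨h₄, h₃, h₁, h₂⟩
    exact ⟨h₁, by rw [← h₁, h₂], h₃, h₄⟩
end

section
/- (Saddle structure of the unconstrained Bethe free energy.) Let ρ ∈ [0,1], Δ > 0, F ∈ ℝ^{M×N}, y ∈ ℝ^M, and let (R,Σ,a,c) satisfy Σ_i > 0, c_i ≥ 0, a_i = f_a(R_i,Σ_i), c_i = f_c(R_i,Σ_i), and 1/Σ_i² = ∑_μ F_{μi}²/(Δ + V_μ) where V_μ = ∑_j F_{μj}² c_j, for all i. Then for every i the unconstrained Bethe free energy F_B satisfies: the second partial derivative in a_i equals ∑_μ F_{μi}²/Δ − 1/Σ_i² ≥ 0; the second partial derivative in c_i equals −∑_μ F_{μi}⁴/(2(Δ + V_μ)²) ≤ 0; and the second partial derivative in R_i equals −f_c(R_i,Σ_i)/Σ_i⁴ ≤ 0. -/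
open MeasureTheory ProbabilityTheory

/-- The (unconstrained) Bethe free energy `F_B(R,Σ,a,c)`. -/
noncomputable def FB (ρ : ℝ) {M N : ℕ} (F : Fin M → Fin N → ℝ) (y : Fin M → ℝ)
    (Δ : ℝ) (R Sv a c : Fin N → ℝ) : ℝ :=
  1 / (2 * Δ) * ∑ μ, (y μ - ∑ i, F μ i * a i) ^ 2
    + (M : ℝ) / 2 * Real.log (2 * Real.pi * Δ)
    + 1 / 2 * ∑ μ, Real.log (1 + (∑ i, F μ i ^ 2 * c i) / Δ)
    - ∑ i, (Real.log (Zpart ρ (R i) (Sv i)) + (c i + (a i - R i) ^ 2) / (2 * Sv i ^ 2))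

/-- The prior reweighted by the Gaussian factor `exp(-x²/(2σ²))`. -/
noncomputable def weightedPrior (ρ σ : ℝ) : Measure ℝ :=
  (P0 ρ).withDensity fun x => ENNReal.ofReal (Real.exp (-x ^ 2 / (2 * σ ^ 2)))

lemma integral_mul_exp_P0 (ρ R σ : ℝ) (g : ℝ → ℝ) :
    ∫ x, g x * Real.exp (-(x - R) ^ 2 / (2 * σ ^ 2)) ∂(P0 ρ)
      = Real.exp (-R ^ 2 / (2 * σ ^ 2))
        * ∫ x, g x * Real.exp (R / σ ^ 2 * x) ∂(weightedPrior ρ σ) := by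
  rw [weightedPrior, integral_withDensity_eq_integral_toReal_smul (by fun_prop) (by simp),
    ← integral_const_mul]
  congr 1 with x
  rw [ENNReal.toReal_ofReal (Real.exp_pos _).le, smul_eq_mul]
  have h : -(x - R) ^ 2 / (2 * σ ^ 2)
      = -R ^ 2 / (2 * σ ^ 2) + (-x ^ 2 / (2 * σ ^ 2) + R / σ ^ 2 * x) := by ring
  rw [h, Real.exp_add, Real.exp_add]
  ring

lemma integrable_exp_mul_weightedPrior (ρ σ t : ℝ) :
    Integrable (fun x => Real.exp (t * x)) (weightedPrior ρ σ) := by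
  have hP : Integrable (fun x => Real.exp (t * x)) (P0 ρ) := by
    refine Integrable.add_measure ?_ ?_
    · exact (integrable_exp_mul_gaussianReal t).smul_measure ENNReal.ofReal_ne_top
    · exact (integrable_dirac (by simp)).smul_measure ENNReal.ofReal_ne_top
  refine hP.mono_measure ?_
  calc weightedPrior ρ σ ≤ (P0 ρ).withDensity 1 := by
        refine withDensity_mono (Filter.Eventually.of_forall fun x => ?_)
        simp only [Pi.one_apply, ENNReal.ofReal_le_one, Real.exp_le_one_iff]
        rw [neg_div]
        exact neg_nonpos.mpr (by positivity)
    _ = P0 ρ := withDensity_one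

lemma weightedPrior_ne_zero {ρ : ℝ} (hρ : ρ ∈ Set.Icc (0 : ℝ) 1) (σ : ℝ) :
    weightedPrior ρ σ ≠ 0 := by
  intro h
  rw [weightedPrior, withDensity_eq_zero_iff (by fun_prop)] at h
  have hP : P0 ρ Set.univ = 1 := by
    simp [P0, ← ENNReal.ofReal_add hρ.1 (sub_nonneg.mpr hρ.2)]
  have hbot : ∀ᵐ _ ∂(P0 ρ), False := by
    filter_upwards [h] with x hx
    simp only [Pi.zero_apply, ENNReal.ofReal_eq_zero] at hx
    exact absurd hx (not_le.mpr (Real.exp_pos _))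
  rw [Filter.eventually_false_iff_eq_bot, ae_eq_bot] at hbot
  simp [hbot] at hP

lemma mgf_weightedPrior_pos {ρ : ℝ} (hρ : ρ ∈ Set.Icc (0 : ℝ) 1) (σ t : ℝ) :
    0 < mgf id (weightedPrior ρ σ) t :=
  mgf_pos' (weightedPrior_ne_zero hρ σ) (integrable_exp_mul_weightedPrior ρ σ t)

lemma Zpart_eq_mgf (ρ R σ : ℝ) :
    Zpart ρ R σ
      = Real.exp (-R ^ 2 / (2 * σ ^ 2)) * mgf id (weightedPrior ρ σ) (R / σ ^ 2) := by
  simpa [Zpart, mgf] using integral_mul_exp_P0 ρ R σ fun _ => 1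

lemma log_Zpart {ρ : ℝ} (hρ : ρ ∈ Set.Icc (0 : ℝ) 1) (R σ : ℝ) :
    Real.log (Zpart ρ R σ)
      = -R ^ 2 / (2 * σ ^ 2) + cgf id (weightedPrior ρ σ) (R / σ ^ 2) := by
  rw [Zpart_eq_mgf, Real.log_mul (Real.exp_ne_zero _) (mgf_weightedPrior_pos hρ σ _).ne',
    Real.log_exp, cgf]

lemma mem_interior_integrableExpSet_weightedPrior (ρ σ t : ℝ) :
    t ∈ interior (integrableExpSet id (weightedPrior ρ σ)) := by
  have h : integrableExpSet id (weightedPrior ρ σ) = Set.univ :=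
    Set.eq_univ_of_forall fun s => integrable_exp_mul_weightedPrior ρ σ s
  simp [h]

/-- The posterior variance is the second derivative of the cumulant generating function of the
reweighted prior. -/
lemma fc_eq_deriv_deriv_cgf (ρ R σ : ℝ) :
    fc ρ R σ = deriv (deriv (cgf id (weightedPrior ρ σ))) (R / σ ^ 2) := by
  have hmem := mem_interior_integrableExpSet_weightedPrior ρ σ (R / σ ^ 2)
  have h2 := iteratedDeriv_two_cgf hmem
  rw [iteratedDeriv_succ, iteratedDeriv_one] at h2
  rw [h2, deriv_cgf hmem, fc, fa, integral_mul_exp_P0 ρ R σ fun x => x,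
    integral_mul_exp_P0 ρ R σ fun x => x ^ 2, Zpart_eq_mgf]
  have he := Real.exp_ne_zero (-R ^ 2 / (2 * σ ^ 2))
  simp only [id, mul_inv]
  field_simp

/-- A second derivative computed from a first derivative valid near the point. -/
lemma iteratedDeriv_two_eq_of_hasDerivAt {f f' : ℝ → ℝ} {f'' x : ℝ}
    (hf : ∀ᶠ t in nhds x, HasDerivAt f (f' t) t) (hf' : HasDerivAt f' f'' x) :
    iteratedDeriv 2 f x = f'' := by
  rw [iteratedDeriv_succ, iteratedDeriv_one]
  have h : deriv f =ᶠ[nhds x] f' := hf.mono fun t ht => ht.deriv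
  rw [h.deriv_eq, hf'.deriv]

/-- Changing one coordinate changes a separable sum by the corresponding term only. -/
lemma sum_apply_update {ι : Type*} [Fintype ι] [DecidableEq ι] (g : ι → ℝ → ℝ) (v : ι → ℝ)
    (i : ι) (t : ℝ) :
    ∑ j, g j (Function.update v i t j) = ∑ j, g j (v j) + (g i t - g i (v i)) := by
  rw [← sub_eq_iff_eq_add', ← Finset.sum_sub_distrib, Finset.sum_eq_single i]
  · simp
  · intro j _ hj
    simp [Function.update_of_ne hj]
  · simp

lemma iteratedDeriv_two_FB_a (ρ : ℝ) {M N : ℕ} (F : Fin M → Fin N → ℝ) (y : Fin M → ℝ)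
    (Δ : ℝ) (R Sv a c : Fin N → ℝ) (i : Fin N) :
    iteratedDeriv 2 (fun t => FB ρ F y Δ R Sv (Function.update a i t) c) (a i)
      = ∑ μ, F μ i ^ 2 / Δ - 1 / Sv i ^ 2 := by
  set r : Fin M → ℝ → ℝ := fun μ t => y μ - (∑ j, F μ j * a j + (F μ i * t - F μ i * a i)) with hr
  have hr' : ∀ μ t, HasDerivAt (r μ) (-F μ i) t := fun μ t => by
    simpa using ((((hasDerivAt_id t).const_mul (F μ i)).sub_const (F μ i * a i)).const_add
      (∑ j, F μ j * a j)).const_sub (y μ)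
  have hFB : (fun t => FB ρ F y Δ R Sv (Function.update a i t) c) = fun t =>
      1 / (2 * Δ) * ∑ μ, r μ t ^ 2
        + ((M : ℝ) / 2 * Real.log (2 * Real.pi * Δ)
          + 1 / 2 * ∑ μ, Real.log (1 + (∑ j, F μ j ^ 2 * c j) / Δ)
          - (∑ j, (Real.log (Zpart ρ (R j) (Sv j)) + (c j + (a j - R j) ^ 2) / (2 * Sv j ^ 2))
            - (a i - R i) ^ 2 / (2 * Sv i ^ 2)))
        - (t - R i) ^ 2 / (2 * Sv i ^ 2) := by
    funext t
    have h1 := fun μ => sum_apply_update (fun j s => F μ j * s) a i t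
    have h2 := sum_apply_update (fun j s => Real.log (Zpart ρ (R j) (Sv j))
      + (c j + (s - R j) ^ 2) / (2 * Sv j ^ 2)) a i t
    simp only [FB, h1, h2, hr]
    ring
  rw [hFB]
  refine iteratedDeriv_two_eq_of_hasDerivAt
    (f' := fun t => 1 / (2 * Δ) * ∑ μ, 2 * r μ t * -F μ i - 2 * (t - R i) / (2 * Sv i ^ 2))
    (Filter.Eventually.of_forall fun t => ?_) ?_
  · have h1 := HasDerivAt.fun_sum (u := Finset.univ) fun μ _ => (hr' μ t).pow 2
    have h2 := (((hasDerivAt_id t).sub_const (R i)).pow 2).div_const (2 * Sv i ^ 2)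
    refine HasDerivAt.congr_deriv (((h1.const_mul (1 / (2 * Δ))).add_const _).sub h2) ?_
    simp
  · have h1 := HasDerivAt.fun_sum (u := Finset.univ) fun μ _ =>
      ((hr' μ (a i)).const_mul 2).mul_const (-F μ i)
    have h2 := (((hasDerivAt_id (a i)).sub_const (R i)).const_mul 2).div_const (2 * Sv i ^ 2)
    refine HasDerivAt.congr_deriv ((h1.const_mul (1 / (2 * Δ))).sub h2) ?_
    rw [Finset.mul_sum]
    congr 1
    · refine Finset.sum_congr rfl fun μ _ => ?_
      ring
    · ring

lemma iteratedDeriv_two_FB_c (ρ : ℝ) {M N : ℕ} (F : Fin M → Fin N → ℝ) (y : Fin M → ℝ)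
    {Δ : ℝ} (hΔ : 0 < Δ) (R Sv a c : Fin N → ℝ) (hc0 : ∀ i, 0 ≤ c i) (i : Fin N) :
    iteratedDeriv 2 (fun t => FB ρ F y Δ R Sv a (Function.update c i t)) (c i)
      = -∑ μ, F μ i ^ 4 / (2 * (Δ + ∑ j, F μ j ^ 2 * c j) ^ 2) := by
  set w : Fin M → ℝ → ℝ := fun μ t =>
    1 + (∑ j, F μ j ^ 2 * c j + (F μ i ^ 2 * t - F μ i ^ 2 * c i)) / Δ with hw
  have hw' : ∀ μ t, HasDerivAt (w μ) (F μ i ^ 2 / Δ) t := fun μ t => by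
    refine HasDerivAt.const_add 1 (HasDerivAt.div_const ?_ Δ)
    simpa using (((hasDerivAt_id t).const_mul (F μ i ^ 2)).sub_const
      (F μ i ^ 2 * c i)).const_add (∑ j, F μ j ^ 2 * c j)
  have hV : ∀ μ, 0 ≤ ∑ j, F μ j ^ 2 * c j := fun μ =>
    Finset.sum_nonneg fun j _ => mul_nonneg (sq_nonneg _) (hc0 j)
  have hwc : ∀ μ, w μ (c i) = (Δ + ∑ j, F μ j ^ 2 * c j) / Δ := fun μ => by
    simp only [hw]
    field_simp
    ring
  have hpos : ∀ μ, 0 < w μ (c i) := fun μ => by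
    rw [hwc]
    have := hV μ
    positivity
  have hFB : (fun t => FB ρ F y Δ R Sv a (Function.update c i t)) = fun t =>
      1 / 2 * ∑ μ, Real.log (w μ t)
        + (1 / (2 * Δ) * ∑ μ, (y μ - ∑ j, F μ j * a j) ^ 2
          + (M : ℝ) / 2 * Real.log (2 * Real.pi * Δ)
          - (∑ j, (Real.log (Zpart ρ (R j) (Sv j)) + (c j + (a j - R j) ^ 2) / (2 * Sv j ^ 2))
            - c i / (2 * Sv i ^ 2)))
        - t / (2 * Sv i ^ 2) := by
    funext t
    have h1 := fun μ => sum_apply_update (fun j s => F μ j ^ 2 * s) c i t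
    have h2 := sum_apply_update (fun j s => Real.log (Zpart ρ (R j) (Sv j))
      + (s + (a j - R j) ^ 2) / (2 * Sv j ^ 2)) c i t
    simp only [FB, h1, h2, hw]
    ring
  rw [hFB]
  refine iteratedDeriv_two_eq_of_hasDerivAt
    (f' := fun t => 1 / 2 * ∑ μ, F μ i ^ 2 / Δ / w μ t - 1 / (2 * Sv i ^ 2)) ?_ ?_
  · have hev : ∀ᶠ t in nhds (c i), ∀ μ, 0 < w μ t :=
      Filter.eventually_all.mpr fun μ =>
        (hw' μ (c i)).continuousAt.eventually (lt_mem_nhds (hpos μ))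
    filter_upwards [hev] with t ht
    have h1 := HasDerivAt.fun_sum (u := Finset.univ) fun μ _ => (hw' μ t).log (ht μ).ne'
    exact ((h1.const_mul (1 / 2)).add_const _).sub ((hasDerivAt_id t).div_const (2 * Sv i ^ 2))
  · have h1 := HasDerivAt.fun_sum (u := Finset.univ) fun μ _ =>
      (hasDerivAt_const (c i) (F μ i ^ 2 / Δ)).fun_div (hw' μ (c i)) (hpos μ).ne'
    refine HasDerivAt.congr_deriv ((h1.const_mul (1 / 2)).sub_const (1 / (2 * Sv i ^ 2))) ?_
    rw [Finset.mul_sum, ← Finset.sum_neg_distrib]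
    refine Finset.sum_congr rfl fun μ _ => ?_
    rw [hwc]
    have hne : Δ + ∑ j, F μ j ^ 2 * c j ≠ 0 := by
      have := hV μ
      positivity
    field_simp
    ring

lemma iteratedDeriv_two_FB_R {ρ : ℝ} (hρ : ρ ∈ Set.Icc (0 : ℝ) 1) {M N : ℕ}
    (F : Fin M → Fin N → ℝ) (y : Fin M → ℝ) (Δ : ℝ) (R Sv a c : Fin N → ℝ) (i : Fin N) :
    iteratedDeriv 2 (fun t => FB ρ F y Δ (Function.update R i t) Sv a c) (R i)
      = -(fc ρ (R i) (Sv i)) / Sv i ^ 4 := by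
  set K := cgf id (weightedPrior ρ (Sv i)) with hK
  have hKan : ∀ s, AnalyticAt ℝ K s := fun s =>
    analyticAt_cgf (mem_interior_integrableExpSet_weightedPrior ρ (Sv i) s)
  have hFB : (fun t => FB ρ F y Δ (Function.update R i t) Sv a c) = fun t =>
      t * (a i / Sv i ^ 2) + (FB ρ F y Δ R Sv a c - R i * (a i / Sv i ^ 2)
        + K (R i / Sv i ^ 2)) - K (t / Sv i ^ 2) := by
    funext t
    have h2 := sum_apply_update (fun j s => Real.log (Zpart ρ s (Sv j))
      + (c j + (a j - s) ^ 2) / (2 * Sv j ^ 2)) R i t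
    simp only [FB, h2, log_Zpart hρ t, log_Zpart hρ (R i), hK]
    ring
  have hdiv : ∀ t, HasDerivAt (fun s : ℝ => s / Sv i ^ 2) (1 / Sv i ^ 2) t := fun t =>
    (hasDerivAt_id t).div_const (Sv i ^ 2)
  rw [hFB]
  refine iteratedDeriv_two_eq_of_hasDerivAt
    (f' := fun t => 1 * (a i / Sv i ^ 2) - deriv K (t / Sv i ^ 2) * (1 / Sv i ^ 2))
    (Filter.Eventually.of_forall fun t => ?_) ?_
  · have h1 := (hKan (t / Sv i ^ 2)).differentiableAt.hasDerivAt.comp t (hdiv t)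
    exact (((hasDerivAt_id t).mul_const (a i / Sv i ^ 2)).add_const _).sub h1
  · have h1 := (hKan (R i / Sv i ^ 2)).deriv.differentiableAt.hasDerivAt.comp (R i) (hdiv (R i))
    refine HasDerivAt.congr_deriv ((h1.mul_const (1 / Sv i ^ 2)).const_sub (1 * (a i / Sv i ^ 2))) ?_
    rw [fc_eq_deriv_deriv_cgf]
    ring

/-- saddle structure of the unconstrained Bethe free energy: at a point
satisfying the consistency conditions and `1/Σ_i² = ∑_μ F_{μi}²/(Δ + V_μ)`, the second
partial derivative of `F_B` in `a_i` is `∑_μ F_{μi}²/Δ − 1/Σ_i² ≥ 0`, in `c_i` is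
`−∑_μ F_{μi}⁴/(2(Δ+V_μ)²) ≤ 0`, and in `R_i` is `−f_c(R_i,Σ_i)/Σ_i⁴ ≤ 0`. -/
theorem stmt11 (ρ : ℝ) (hρ : ρ ∈ Set.Icc (0 : ℝ) 1) {M N : ℕ}
    (F : Fin M → Fin N → ℝ) (y : Fin M → ℝ) (Δ : ℝ) (hΔ : 0 < Δ)
    (R Sv a c : Fin N → ℝ) (hS : ∀ i, 0 < Sv i) (hc0 : ∀ i, 0 ≤ c i)
    (ha : ∀ i, a i = fa ρ (R i) (Sv i)) (hc : ∀ i, c i = fc ρ (R i) (Sv i))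
    (hSig : ∀ i, 1 / Sv i ^ 2 = ∑ μ, F μ i ^ 2 / (Δ + ∑ j, F μ j ^ 2 * c j)) :
    ∀ i,
      (iteratedDeriv 2 (fun t => FB ρ F y Δ R Sv (Function.update a i t) c) (a i)
          = ∑ μ, F μ i ^ 2 / Δ - 1 / Sv i ^ 2 ∧
        0 ≤ ∑ μ, F μ i ^ 2 / Δ - 1 / Sv i ^ 2) ∧
      (iteratedDeriv 2 (fun t => FB ρ F y Δ R Sv a (Function.update c i t)) (c i)
          = -∑ μ, F μ i ^ 4 / (2 * (Δ + ∑ j, F μ j ^ 2 * c j) ^ 2) ∧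
        -∑ μ, F μ i ^ 4 / (2 * (Δ + ∑ j, F μ j ^ 2 * c j) ^ 2) ≤ 0) ∧
      (iteratedDeriv 2 (fun t => FB ρ F y Δ (Function.update R i t) Sv a c) (R i)
          = -(fc ρ (R i) (Sv i)) / Sv i ^ 4 ∧
        -(fc ρ (R i) (Sv i)) / Sv i ^ 4 ≤ 0) := by
  intro i
  have hV : ∀ μ, 0 ≤ ∑ j, F μ j ^ 2 * c j := fun μ =>
    Finset.sum_nonneg fun j _ => mul_nonneg (sq_nonneg _) (hc0 j)
  refine ⟨⟨iteratedDeriv_two_FB_a ρ F y Δ R Sv a c i, ?_⟩,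
    ⟨iteratedDeriv_two_FB_c ρ F y hΔ R Sv a c hc0 i, ?_⟩,
    ⟨iteratedDeriv_two_FB_R hρ F y Δ R Sv a c i, ?_⟩⟩
  · rw [hSig i, sub_nonneg]
    refine Finset.sum_le_sum fun μ _ => ?_
    exact div_le_div_of_nonneg_left (sq_nonneg _) hΔ (le_add_of_nonneg_right (hV μ))
  · exact neg_nonpos.mpr (Finset.sum_nonneg fun μ _ => by positivity)
  · rw [← hc i, neg_div]
    exact neg_nonpos.mpr (div_nonneg (hc0 i) (by positivity))
end

section
/- (Variance identity for the normalized log-partition.) Let p : ℝ → ℝ be measurable and nonnegative, V > 0 and ω ∈ ℝ, and suppose there exists V' > V such that ∫ (1 + z²)·p(z)·exp(−(z−ω)²/(2V')) dz < ∞ and Z_out(ω,V) > 0. Let Z^μ(ω,V) = (2πV)^{−1/2}·Z_out(ω,V). Then the function V'' ↦ log Z^μ(ω,V'') has derivative at V equal to (1/2)·(g'_out(ω,V) + g_out(ω,V)²), where g'_out(ω,V) denotes the derivative at ω of the function ω' ↦ g_out(ω',V). -/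
open MeasureTheory

/-- Output-channel partition function `Z_out(ω,V) = ∫ p(z)·exp(−(z−ω)²/(2V)) dz`. -/
noncomputable def Zout (p : ℝ → ℝ) (ω V : ℝ) : ℝ :=
  ∫ z, p z * Real.exp (-(z - ω) ^ 2 / (2 * V))

/-- The output function
`g_out(ω,V) = [∫ p(z)·(z−ω)·exp(−(z−ω)²/(2V)) dz]/(V·Z_out(ω,V))`. -/
noncomputable def gout (p : ℝ → ℝ) (ω V : ℝ) : ℝ :=
  (∫ z, p z * (z - ω) * Real.exp (-(z - ω) ^ 2 / (2 * V))) / (V * Zout p ω V)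

/-- The normalized per-measurement partition function `Z^μ(ω,V) = (2πV)^{−1/2}·Z_out(ω,V)`. -/
noncomputable def Zmu (p : ℝ → ℝ) (ω V : ℝ) : ℝ :=
  (Real.sqrt (2 * Real.pi * V))⁻¹ * Zout p ω V

/-- A Gaussian weight of variance `W < V'` is dominated by one of variance `V'` with a different
centre. -/
lemma exp_neg_sq_div_le {W V' : ℝ} (hW : 0 < W) (hWV : W < V') (ω x z : ℝ) :
    Real.exp (-(z - x) ^ 2 / (2 * W)) ≤
      Real.exp ((x - ω) ^ 2 / (2 * (V' - W))) * Real.exp (-(z - ω) ^ 2 / (2 * V')) := by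
  rw [← Real.exp_add, Real.exp_le_exp, ← sub_nonneg]
  have hd : 0 < V' - W := sub_pos.2 hWV
  have hV' : 0 < V' := hW.trans hWV
  have key : (x - ω) ^ 2 / (2 * (V' - W)) + -(z - ω) ^ 2 / (2 * V') - -(z - x) ^ 2 / (2 * W) =
      (W * (x - ω) - (V' - W) * (z - x)) ^ 2 / (2 * W * V' * (V' - W)) := by
    field_simp
    ring
  rw [key]
  positivity

lemma one_add_sq_mul_exp_le {p : ℝ → ℝ} (hp0 : ∀ z, 0 ≤ p z) {W V' : ℝ} (hW : 0 < W)
    (hWV : W < V') (ω x z : ℝ) :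
    (1 + (z - x) ^ 2) * (p z * Real.exp (-(z - x) ^ 2 / (2 * W))) ≤
      (2 * (1 + x ^ 2) * Real.exp ((x - ω) ^ 2 / (2 * (V' - W)))) *
        ((1 + z ^ 2) * p z * Real.exp (-(z - ω) ^ 2 / (2 * V'))) := by
  have hpoly : 1 + (z - x) ^ 2 ≤ 2 * (1 + x ^ 2) * (1 + z ^ 2) := by
    nlinarith [sq_nonneg (z + x), sq_nonneg (z * x)]
  calc (1 + (z - x) ^ 2) * (p z * Real.exp (-(z - x) ^ 2 / (2 * W)))
      ≤ (2 * (1 + x ^ 2) * (1 + z ^ 2)) * (p z *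
          (Real.exp ((x - ω) ^ 2 / (2 * (V' - W))) * Real.exp (-(z - ω) ^ 2 / (2 * V')))) := by
        gcongr
        · exact mul_nonneg (hp0 z) (Real.exp_pos _).le
        · exact hp0 z
        · exact exp_neg_sq_div_le hW hWV ω x z
    _ = _ := by ring

section

variable {p : ℝ → ℝ} {V V' ω : ℝ}

lemma integrable_one_add_sq_mul_exp (hp : Measurable p) (hp0 : ∀ z, 0 ≤ p z) (hV : 0 < V)
    (hVV : V < V')
    (hint : Integrable (fun z => (1 + z ^ 2) * p z * Real.exp (-(z - ω) ^ 2 / (2 * V')))) :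
    Integrable (fun z => (1 + (z - ω) ^ 2) * (p z * Real.exp (-(z - ω) ^ 2 / (2 * V)))) := by
  refine (hint.const_mul _).mono' (by fun_prop)
    (.of_forall fun z => (Real.norm_of_nonneg ?_).trans_le (one_add_sq_mul_exp_le hp0 hV hVV ω ω z))
  have := hp0 z
  positivity

lemma integrable_of_abs_le_one_add_sq (hp : Measurable p) (hp0 : ∀ z, 0 ≤ p z) (hV : 0 < V)
    (hVV : V < V')
    (hint : Integrable (fun z => (1 + z ^ 2) * p z * Real.exp (-(z - ω) ^ 2 / (2 * V'))))
    {q : ℝ → ℝ} (hq : Measurable q) (hle : ∀ z, |q z| ≤ 1 + (z - ω) ^ 2) :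
    Integrable (fun z => p z * q z * Real.exp (-(z - ω) ^ 2 / (2 * V))) := by
  refine (integrable_one_add_sq_mul_exp hp hp0 hV hVV hint).mono' (by fun_prop)
    (.of_forall fun z => ?_)
  have hw : 0 ≤ p z * Real.exp (-(z - ω) ^ 2 / (2 * V)) := mul_nonneg (hp0 z) (Real.exp_pos _).le
  rw [mul_right_comm, mul_comm, norm_mul, Real.norm_of_nonneg hw, Real.norm_eq_abs]
  exact mul_le_mul_of_nonneg_right (hle z) hw

lemma abs_le_one_add_sq (t : ℝ) : |t| ≤ 1 + t ^ 2 := by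
  nlinarith [sq_abs t, sq_nonneg (|t| - 1), abs_nonneg t]

lemma hasDerivAt_Zout_variance (hp : Measurable p) (hp0 : ∀ z, 0 ≤ p z) (hV : 0 < V)
    (hVV : V < V')
    (hint : Integrable (fun z => (1 + z ^ 2) * p z * Real.exp (-(z - ω) ^ 2 / (2 * V')))) :
    HasDerivAt (fun W => Zout p ω W)
      ((∫ z, p z * (z - ω) ^ 2 * Real.exp (-(z - ω) ^ 2 / (2 * V))) / (2 * V ^ 2)) V := by
  have hs : Set.Ioo (V / 2) V' ∈ nhds V := Ioo_mem_nhds (by linarith) hVV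
  have h0 := integrable_of_abs_le_one_add_sq hp hp0 hV hVV hint (q := fun _ => 1)
    measurable_const (fun z => by rw [abs_one]; nlinarith [sq_nonneg (z - ω)])
  have key := (hasDerivAt_integral_of_dominated_loc_of_deriv_le (μ := volume)
    (F := fun W z => p z * Real.exp (-(z - ω) ^ 2 / (2 * W)))
    (F' := fun W z => p z * (z - ω) ^ 2 * Real.exp (-(z - ω) ^ 2 / (2 * W)) / (2 * W ^ 2))
    (bound := fun z => (2 / V ^ 2 * (2 * (1 + ω ^ 2))) *
      ((1 + z ^ 2) * p z * Real.exp (-(z - ω) ^ 2 / (2 * V')))) hs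
    (.of_forall fun W => by fun_prop) (by simpa using h0) (by fun_prop)
    (.of_forall fun z W hW => ?_) (hint.const_mul _) (.of_forall fun z W hW => ?_)).2
  · rwa [integral_div] at key
  · have hW0 : 0 < W := by linarith [hW.1]
    have hpz := hp0 z
    have hb := one_add_sq_mul_exp_le hp0 hW0 hW.2 ω ω z
    simp only [sub_self, ne_eq, OfNat.ofNat_ne_zero, not_false_eq_true, zero_pow, zero_div,
      Real.exp_zero, mul_one] at hb
    rw [Real.norm_of_nonneg (by positivity)]
    have hw : 0 ≤ p z * Real.exp (-(z - ω) ^ 2 / (2 * W)) := by positivity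
    have hinv : 1 / (2 * W ^ 2) ≤ 2 / V ^ 2 := by
      rw [div_le_div_iff₀ (by positivity) (by positivity)]
      nlinarith [hW.1]
    calc p z * (z - ω) ^ 2 * Real.exp (-(z - ω) ^ 2 / (2 * W)) / (2 * W ^ 2)
        = 1 / (2 * W ^ 2) * ((z - ω) ^ 2 * (p z * Real.exp (-(z - ω) ^ 2 / (2 * W)))) := by ring
      _ ≤ 2 / V ^ 2 * ((1 + (z - ω) ^ 2) * (p z * Real.exp (-(z - ω) ^ 2 / (2 * W)))) := by
          gcongr
          linarith
      _ ≤ _ := by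
          rw [mul_assoc (2 / V ^ 2)]
          gcongr
  · have hW0 : W ≠ 0 := by linarith [hW.1]
    have h := (((hasDerivAt_const W (-(z - ω) ^ 2)).div ((hasDerivAt_id W).const_mul 2)
      (by simpa using hW0)).exp).const_mul (p z)
    refine h.congr_deriv ?_
    simp only [Pi.div_apply, id_eq]
    field_simp
    ring

/-- Differentiation in `ω` under the integral sign, for an integrand whose `ω`-derivative has at
most quadratic growth relative to the weight. -/
lemma hasDerivAt_integral_center (hp : Measurable p) (hp0 : ∀ z, 0 ≤ p z) (hV : 0 < V)
    (hVV : V < V')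
    (hint : Integrable (fun z => (1 + z ^ 2) * p z * Real.exp (-(z - ω) ^ 2 / (2 * V'))))
    {q q' : ℝ → ℝ} {C : ℝ} (hq : Measurable q) (hq' : Measurable q')
    (hle : ∀ t, |q t| ≤ 1 + t ^ 2) (hle' : ∀ t, |q' t| ≤ C * (1 + t ^ 2))
    (hderiv : ∀ t, HasDerivAt (fun t => q t * Real.exp (-t ^ 2 / (2 * V)))
      (-(q' t * Real.exp (-t ^ 2 / (2 * V)))) t) :
    HasDerivAt (fun x => ∫ z, p z * q (z - x) * Real.exp (-(z - x) ^ 2 / (2 * V)))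
      (∫ z, p z * q' (z - ω) * Real.exp (-(z - ω) ^ 2 / (2 * V))) ω := by
  have hC : 0 ≤ C := by simpa using (abs_nonneg _).trans (hle' 0)
  refine (hasDerivAt_integral_of_dominated_loc_of_deriv_le (μ := volume)
    (F := fun x z => p z * q (z - x) * Real.exp (-(z - x) ^ 2 / (2 * V)))
    (F' := fun x z => p z * q' (z - x) * Real.exp (-(z - x) ^ 2 / (2 * V)))
    (bound := fun z => (C * (2 * (1 + (2 * ω ^ 2 + 2)) * Real.exp (1 / (2 * (V' - V))))) *
      ((1 + z ^ 2) * p z * Real.exp (-(z - ω) ^ 2 / (2 * V'))))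
    (Ioo_mem_nhds (sub_one_lt ω) (lt_add_one ω))
    (.of_forall fun x => by fun_prop)
    (integrable_of_abs_le_one_add_sq hp hp0 hV hVV hint (by fun_prop) fun z => hle _)
    (by fun_prop)
    (.of_forall fun z x hx => ?_) (hint.const_mul _) (.of_forall fun z x hx => ?_)).2
  · have hpz := hp0 z
    have hd : 0 < V' - V := sub_pos.2 hVV
    have hw : 0 ≤ p z * Real.exp (-(z - x) ^ 2 / (2 * V)) := by positivity
    have hx1 : (x - ω) ^ 2 ≤ 1 := by nlinarith [hx.1, hx.2]
    have hx2 : x ^ 2 ≤ 2 * ω ^ 2 + 2 := by nlinarith [sq_nonneg (x - 2 * ω)]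
    rw [mul_right_comm, mul_comm, norm_mul, Real.norm_of_nonneg hw, Real.norm_eq_abs]
    calc |q' (z - x)| * (p z * Real.exp (-(z - x) ^ 2 / (2 * V)))
        ≤ C * (1 + (z - x) ^ 2) * (p z * Real.exp (-(z - x) ^ 2 / (2 * V))) := by
          gcongr
          exact hle' _
      _ ≤ C * ((2 * (1 + x ^ 2) * Real.exp ((x - ω) ^ 2 / (2 * (V' - V)))) *
            ((1 + z ^ 2) * p z * Real.exp (-(z - ω) ^ 2 / (2 * V')))) := by
          rw [mul_assoc]
          exact mul_le_mul_of_nonneg_left (one_add_sq_mul_exp_le hp0 hV hVV ω x z) hC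
      _ ≤ _ := by
          rw [← mul_assoc C]
          gcongr
  · have h := ((hderiv (z - x)).comp x ((hasDerivAt_id x).const_sub z)).const_mul (p z)
    simp only [Function.comp_def, ← mul_assoc] at h
    exact h.congr_deriv (by ring)

lemma hasDerivAt_exp_neg_sq_div (hV : V ≠ 0) (t : ℝ) :
    HasDerivAt (fun t => Real.exp (-t ^ 2 / (2 * V)))
      (-(t / V * Real.exp (-t ^ 2 / (2 * V)))) t := by
  refine (((hasDerivAt_pow 2 t).neg.div_const (2 * V)).exp).congr_deriv ?_
  simp
  field_simp

lemma hasDerivAt_Zout_center (hp : Measurable p) (hp0 : ∀ z, 0 ≤ p z) (hV : 0 < V)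
    (hVV : V < V')
    (hint : Integrable (fun z => (1 + z ^ 2) * p z * Real.exp (-(z - ω) ^ 2 / (2 * V')))) :
    HasDerivAt (fun x => Zout p x V)
      ((∫ z, p z * (z - ω) * Real.exp (-(z - ω) ^ 2 / (2 * V))) / V) ω := by
  have h := hasDerivAt_integral_center hp hp0 hV hVV hint (q := fun _ => 1) (q' := fun t => t / V)
    (C := 1 / V) (by fun_prop) (by fun_prop)
    (fun t => by rw [abs_one]; nlinarith [sq_nonneg t])
    (fun t => by
      rw [abs_div, abs_of_pos hV, one_div_mul_eq_div]
      exact div_le_div_of_nonneg_right (abs_le_one_add_sq t) hV.le)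
    (fun t => by simpa using hasDerivAt_exp_neg_sq_div hV.ne' t)
  simp only [mul_one] at h
  refine h.congr_deriv ?_
  rw [← integral_div]
  congr 1 with z
  ring

lemma hasDerivAt_firstMoment_center (hp : Measurable p) (hp0 : ∀ z, 0 ≤ p z) (hV : 0 < V)
    (hVV : V < V')
    (hint : Integrable (fun z => (1 + z ^ 2) * p z * Real.exp (-(z - ω) ^ 2 / (2 * V')))) :
    HasDerivAt (fun x => ∫ z, p z * (z - x) * Real.exp (-(z - x) ^ 2 / (2 * V)))
      ((∫ z, p z * (z - ω) ^ 2 * Real.exp (-(z - ω) ^ 2 / (2 * V))) / V - Zout p ω V) ω := by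
  have h := hasDerivAt_integral_center hp hp0 hV hVV hint (q := fun t => t)
    (q' := fun t => t ^ 2 / V - 1) (C := 1 / V + 1) (by fun_prop) (by fun_prop)
    abs_le_one_add_sq
    (fun t => by
      have h1 : 0 ≤ t ^ 2 / V := by positivity
      have h2 : (1 / V + 1) * (1 + t ^ 2) = 1 / V + t ^ 2 / V + 1 + t ^ 2 := by ring
      have h3 : 0 < 1 / V := by positivity
      rw [h2, abs_le]
      constructor <;> nlinarith [sq_nonneg t])
    (fun t => ((hasDerivAt_id t).mul (hasDerivAt_exp_neg_sq_div hV.ne' t)).congr_deriv (by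
      simp only [id_eq]
      ring))
  refine h.congr_deriv ?_
  have h0 := integrable_of_abs_le_one_add_sq hp hp0 hV hVV hint (q := fun _ => 1)
    measurable_const (fun z => by rw [abs_one]; nlinarith [sq_nonneg (z - ω)])
  have h2 := integrable_of_abs_le_one_add_sq hp hp0 hV hVV hint (q := fun z => (z - ω) ^ 2)
    (by fun_prop) (fun z => by rw [abs_of_nonneg (sq_nonneg _)]; linarith)
  simp only [mul_one] at h0
  rw [Zout, ← integral_div, ← integral_sub (h2.div_const V) h0]
  congr 1 with z
  ring

end

/-- variance identity for the normalized log-partition: under a domination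
hypothesis at some `V' > V` and `Z_out(ω,V) > 0`, the function `V'' ↦ log Z^μ(ω,V'')` has
derivative at `V` equal to `(1/2)·(g'_out(ω,V) + g_out(ω,V)²)`, where `g'_out(ω,V)` is the
derivative at `ω` of `ω' ↦ g_out(ω',V)`. -/
theorem stmt14 (p : ℝ → ℝ) (hp : Measurable p) (hp0 : ∀ z, 0 ≤ p z)
    (V ω : ℝ) (hV : 0 < V)
    (hdom : ∃ V' > V,
      Integrable (fun z => (1 + z ^ 2) * p z * Real.exp (-(z - ω) ^ 2 / (2 * V'))))
    (hZ : 0 < Zout p ω V) :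
    HasDerivAt (fun V'' => Real.log (Zmu p ω V''))
      (1 / 2 * (deriv (fun ω' => gout p ω' V) ω + gout p ω V ^ 2)) V := by
  obtain ⟨V', hVV, hint⟩ := hdom
  have hN := hasDerivAt_firstMoment_center hp hp0 hV hVV hint
  have hZω := hasDerivAt_Zout_center hp hp0 hV hVV hint
  have hZV := hasDerivAt_Zout_variance hp hp0 hV hVV hint
  have hg : HasDerivAt (fun x => gout p x V) _ ω :=
    hN.div (hZω.const_mul V) (mul_pos hV hZ).ne'
  have hpos : 0 < 2 * Real.pi * V := by positivity
  have hsqrt : HasDerivAt (fun W => Real.sqrt (2 * Real.pi * W)) _ V :=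
    ((hasDerivAt_id V).const_mul (2 * Real.pi)).sqrt hpos.ne'
  have hs : 0 < Real.sqrt (2 * Real.pi * V) := Real.sqrt_pos.2 hpos
  have hmu : HasDerivAt (fun W => Zmu p ω W) _ V := (hsqrt.inv hs.ne').mul hZV
  have hmu0 : Zmu p ω V ≠ 0 := (mul_pos (inv_pos.2 hs) hZ).ne'
  refine (hmu.log hmu0).congr_deriv ?_
  rw [hg.deriv, Zmu, gout]
  have hsq := Real.sq_sqrt hpos.le
  simp only [id_eq, Pi.inv_apply]
  rw [hsq]
  generalize Real.sqrt (2 * Real.pi * V) = s at *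
  generalize Zout p ω V = Z at *
  have hpi := Real.pi_pos
  field_simp
  ring
end
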